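/- Let n ≥ 4 and let A be the adjacency matrix of a simple undirected graph on n vertices (A symmetric, entries in {0,1}, zero diagonal), with vertex degrees d_i = ∑_j A_{i,j}. Then the third correlation of f_A evaluated at the pair of transpositions ((n−2,n−1), (n−3,n−1)) satisfies S^(3)_{f_A}((n−2,n−1), (n−3,n−1)) = (1/|S_n|) ∑_{g∈S_n} A_{g(n),g(n−1)} A_{g(n),g(n−2)} A_{g(n),g(n−3)} = (∑_{i=1}^{n} d_i(d_i−1)(d_i−2)) / (n(n−1)(n−2)(n−3)). Equivalently, n(n−1)(n−2)(n−3) · S^(3)_{f_A}((n−2,n−1),(n−3,n−1)) equals six times the number of unordered triples of distinct edges all sharing one common vertex. -/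

import Mathlib

/-!
Permutations of `V` act transitively on the injections `Fin (k + 1) ↪ V`, so the average over all
permutations is the average over all injections `e`. After the choice of `v = e 0`, the nonzero
terms are the injective `k`-tuples of neighbours of `v`; they number `d(d - 1)⋯(d - k + 1)` for `d`
the degree of `v`, which is `k!` times the number of `k`-sets of edges at `v`. Two distinct edges
share at most one vertex, so for `k ≥ 2` no set of `k` edges is counted at two vertices.
-/

open Finset

section Averaging

variable {G X M : Type*} [Group G] [MulAction G X] [Fintype G] [Fintype X] [AddCommMonoid M]

lemma card_nsmul_sum_smul_eq [MulAction.IsPretransitive G X] (x₀ : X) (F : X → M) :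
    Fintype.card X • ∑ g : G, F (g • x₀) = Fintype.card G • ∑ x, F x := by
  have sum_orbit_eq (x : X) : ∑ g : G, F (g • x) = ∑ g : G, F (g • x₀) := by
    obtain ⟨h, rfl⟩ := MulAction.exists_smul_eq G x₀ x
    exact Fintype.sum_equiv (Equiv.mulRight h) _ _ fun g ↦ by simp [mul_smul]
  calc Fintype.card X • ∑ g : G, F (g • x₀)
    _ = ∑ x, ∑ g : G, F (g • x) := by simp [sum_orbit_eq]
    _ = ∑ g : G, ∑ x, F (g • x) := sum_comm
    _ = ∑ _g : G, ∑ x, F x := sum_congr rfl fun g _ ↦ Equiv.sum_comp (MulAction.toPerm g) F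
    _ = Fintype.card G • ∑ x, F x := by simp

end Averaging

lemma descFactorial_card_ne_zero {V : Type*} [Fintype V] (K : Type*) [AddMonoidWithOne K]
    [CharZero K] {k : ℕ} (e : Fin k ↪ V) :
    ((Fintype.card V).descFactorial k : K) ≠ 0 :=
  Nat.cast_ne_zero.2 (Nat.descFactorial_pos.2 (by simpa using Fintype.card_le_of_embedding e)).ne'

lemma pair_right_injective {V : Type*} [DecidableEq V] (v : V) :
    Function.Injective fun w ↦ ({v, w} : Finset V) := by
  intro w w' (h : ({v, w} : Finset V) = {v, w'})
  have hw : w ∈ ({v, w'} : Finset V) := h ▸ by simp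
  have hw' : w' ∈ ({v, w} : Finset V) := h ▸ by simp
  grind

section Star

variable {V : Type*} (G : SimpleGraph V)

/-- An injection that places a star with `k` leaves in `G`, with centre the image of `0`, amounts to
the choice of a centre and of an injective `k`-tuple of its neighbours. -/
def starEmbeddingEquiv (k : ℕ) :
    {e : Fin (k + 1) ↪ V // ∀ i : Fin k, G.Adj (e 0) (e i.succ)} ≃
      Σ v, Fin k ↪ G.neighborSet v where
  toFun e := ⟨e.1 0, ((Fin.succEmb k).trans e.1).codRestrict _ e.2⟩
  invFun p := ⟨Fin.Embedding.cons (p.2.trans (Function.Embedding.subtype _)) (a := p.1) (by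
    rintro ⟨i, hi⟩
    exact G.ne_of_adj (p.2 i).2 hi.symm), fun i ↦ (p.2 i).2⟩
  left_inv e := by
    ext i
    cases i using Fin.cases <;> rfl
  right_inv _ := rfl

variable [Fintype V] [DecidableRel G.Adj]

lemma sum_adjMatrix_row (R : Type*) [NonAssocSemiring R] (v : V) :
    ∑ w, G.adjMatrix R v w = G.degree v := by
  simpa [Matrix.mulVec, dotProduct] using G.adjMatrix_mulVec_const_apply (a := (1 : R)) (v := v)

lemma sum_embedding_prod_adjMatrix (R : Type*) [CommSemiring R] (k : ℕ) :
    ∑ e : Fin (k + 1) ↪ V, ∏ i : Fin k, G.adjMatrix R (e 0) (e i.succ) =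
      ∑ v, ((G.degree v).descFactorial k : R) := by
  simp only [SimpleGraph.adjMatrix_apply, prod_boole, sum_boole, mem_univ, true_imp_iff]
  rw [← Fintype.card_subtype, Fintype.card_congr (starEmbeddingEquiv G k)]
  simp only [Fintype.card_sigma, Fintype.card_embedding_eq, Fintype.card_fin,
    SimpleGraph.card_neighborSet_eq_degree, Nat.cast_sum]

lemma average_perm_prod_adjMatrix [DecidableEq V] {K : Type*} [Semifield K] [CharZero K] {k : ℕ}
    (x : Fin (k + 1) ↪ V) :
    ((Fintype.card V).factorial : K)⁻¹ *
        ∑ g : Equiv.Perm V, ∏ i : Fin k, G.adjMatrix K (g (x 0)) (g (x i.succ)) =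
      (∑ v, ((G.degree v).descFactorial k : K)) / (Fintype.card V).descFactorial (k + 1) := by
  have := Equiv.Perm.isMultiplyPretransitive V (k + 1)
  have average := card_nsmul_sum_smul_eq (G := Equiv.Perm V) x fun y ↦
    ∏ i : Fin k, G.adjMatrix K (y 0) (y i.succ)
  rw [sum_embedding_prod_adjMatrix, Fintype.card_embedding_eq, Fintype.card_fin,
    Fintype.card_perm, nsmul_eq_mul, nsmul_eq_mul] at average
  have factorial_ne_zero : ((Fintype.card V).factorial : K) ≠ 0 :=
    Nat.cast_ne_zero.2 (Nat.factorial_ne_zero _)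
  have embedding_count_ne_zero : ((Fintype.card V).descFactorial (k + 1) : K) ≠ 0 :=
    descFactorial_card_ne_zero K x
  rwa [inv_mul_eq_iff_eq_mul₀ factorial_ne_zero, ← mul_div_assoc,
    eq_div_iff embedding_count_ne_zero, mul_comm]

section EdgesAt

variable [DecidableEq V]

/-- The edges of `G` at the vertex `v`, each encoded as a two-element clique. -/
def edgesAt (v : V) : Finset (Finset V) := {e ∈ G.cliqueFinset 2 | v ∈ e}

variable {G}

lemma mem_edgesAt {v : V} {e : Finset V} : e ∈ edgesAt G v ↔ G.IsNClique 2 e ∧ v ∈ e := by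
  simp [edgesAt, SimpleGraph.mem_cliqueFinset_iff]

lemma edgesAt_eq_image (v : V) :
    edgesAt G v = (G.neighborFinset v).image fun w ↦ {v, w} := by
  ext e
  rw [mem_edgesAt, SimpleGraph.isNClique_iff, mem_image]
  constructor
  · rintro ⟨⟨he, hcard⟩, hv⟩
    obtain ⟨w, hw⟩ := card_eq_one.1 (by rw [card_erase_of_mem hv, hcard] : #(e.erase v) = 1)
    obtain rfl : {v, w} = e := by rw [← insert_erase hv, hw]
    have hvw : v ≠ w := by rintro rfl; simp at hcard
    exact ⟨w, (G.mem_neighborFinset v w).2 (he (by simp) (by simp) hvw), rfl⟩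
  · rintro ⟨w, hw, rfl⟩
    have hvw : G.Adj v w := (G.mem_neighborFinset v w).1 hw
    exact ⟨⟨by simpa using fun _ ↦ hvw, card_pair hvw.ne⟩, by simp⟩

lemma card_edgesAt (v : V) : #(edgesAt G v) = G.degree v := by
  rw [edgesAt_eq_image, card_image_of_injective _ (pair_right_injective v),
    G.card_neighborFinset_eq_degree]

lemma eq_pair_of_mem_edgesAt {v w : V} (hvw : v ≠ w) {e : Finset V} (hv : e ∈ edgesAt G v)
    (hw : e ∈ edgesAt G w) : e = {v, w} := by
  rw [mem_edgesAt] at hv hw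
  exact (eq_of_subset_of_card_le (by grind) (by rw [hv.1.card_eq, card_pair hvw])).symm

lemma disjoint_powersetCard_edgesAt {k : ℕ} (hk : 2 ≤ k) {v w : V} (hvw : v ≠ w) :
    Disjoint (powersetCard k (edgesAt G v)) (powersetCard k (edgesAt G w)) := by
  rw [disjoint_left]
  intro t htv htw
  rw [mem_powersetCard] at htv htw
  obtain ⟨e, he, f, hf, hef⟩ := one_lt_card.1 (htv.2 ▸ hk : 1 < #t)
  exact hef <| (eq_pair_of_mem_edgesAt hvw (htv.1 he) (htw.1 he)).trans
    (eq_pair_of_mem_edgesAt hvw (htv.1 hf) (htw.1 hf)).symm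

end EdgesAt

lemma ncard_star_eq_sum_choose {k : ℕ} (hk : 2 ≤ k) :
    {t : Finset (Finset V) | #t = k ∧ (∀ e ∈ t, G.IsNClique 2 e) ∧
      ∃ v, ∀ e ∈ t, v ∈ e}.ncard = ∑ v, (G.degree v).choose k := by
  classical
  have stars_eq : {t : Finset (Finset V) | #t = k ∧ (∀ e ∈ t, G.IsNClique 2 e) ∧
      ∃ v, ∀ e ∈ t, v ∈ e} = univ.biUnion fun v ↦ powersetCard k (edgesAt G v) := by
    ext t
    simp only [Set.mem_ofPred_eq, coe_biUnion, Set.mem_iUnion, mem_coe, mem_univ,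
      exists_prop, true_and, mem_powersetCard, subset_iff, mem_edgesAt, forall_and,
      exists_and_left, exists_and_right]
    tauto
  rw [stars_eq, Set.ncard_coe_finset,
    card_biUnion fun v _ w _ hvw ↦ disjoint_powersetCard_edgesAt hk hvw]
  simp only [card_powersetCard, card_edgesAt]

end Star

theorem thirdCorrelation_star_general {V K : Type*} [Fintype V] [DecidableEq V] [Field K]
    [CharZero K] {k : ℕ} (hk : 2 ≤ k) {A : Matrix V V K} (hA : A.IsAdjMatrix)
    (x : Fin (k + 1) ↪ V) :
    ((Fintype.card V).factorial : K)⁻¹ *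
        ∑ g : Equiv.Perm V, ∏ i : Fin k, A (g (x 0)) (g (x i.succ)) =
      (∑ v, ∏ i ∈ range k, (∑ w, A v w - i)) / (Fintype.card V).descFactorial (k + 1) ∧
    (Fintype.card V).descFactorial (k + 1) * (((Fintype.card V).factorial : K)⁻¹ *
        ∑ g : Equiv.Perm V, ∏ i : Fin k, A (g (x 0)) (g (x i.succ))) =
      k.factorial * {t : Finset (Finset V) | #t = k ∧
        (∀ e ∈ t, #e = 2 ∧ ∀ i ∈ e, ∀ j ∈ e, i ≠ j → A i j = 1) ∧
        ∃ v, ∀ e ∈ t, v ∈ e}.ncard := by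
  classical
  have average := average_perm_prod_adjMatrix (K := K) hA.toGraph x
  have degree_eq (v : V) : ∑ w, A v w = hA.toGraph.degree v := by
    rw [← sum_adjMatrix_row, hA.adjMatrix_toGraph_eq]
  have edge_iff (e : Finset V) : hA.toGraph.IsNClique 2 e ↔
      #e = 2 ∧ ∀ i ∈ e, ∀ j ∈ e, i ≠ j → A i j = 1 := by
    rw [SimpleGraph.isNClique_iff, and_comm]
    rfl
  have stars := ncard_star_eq_sum_choose hA.toGraph hk
  simp only [edge_iff] at stars
  rw [hA.adjMatrix_toGraph_eq] at average
  constructor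
  · simp only [degree_eq, ← descPochhammer_eval_eq_prod_range, descPochhammer_eval_eq_descFactorial,
      average]
  · rw [average, mul_div_cancel₀ _ (descFactorial_card_ne_zero K x)]
    simp only [Nat.descFactorial_eq_factorial_mul_choose, Nat.cast_mul, ← mul_sum, ← Nat.cast_sum,
      ← stars]

/-- Let `n ≥ 4` and `A` the adjacency matrix of a simple undirected graph on
`n` vertices, with degrees `d_i = ∑_j A_{i,j}`. Then the third correlation of `f_A` at the
pair of transpositions `((n-2,n-1), (n-3,n-1))` satisfies
`S^(3)_{f_A}((n-2,n-1),(n-3,n-1)) = (1/n!) ∑_g A_{g(n),g(n-1)} A_{g(n),g(n-2)} A_{g(n),g(n-3)}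
  = (∑_i d_i(d_i-1)(d_i-2)) / (n(n-1)(n-2)(n-3))`;
equivalently, `n(n-1)(n-2)(n-3)` times this value equals six times the number of unordered
triples of distinct edges all sharing one common vertex. -/
theorem thirdCorrelation_star
    (n : ℕ) (hn : 4 ≤ n) (A : Matrix (Fin n) (Fin n) ℂ)
    (hsymm : ∀ i j : Fin n, A i j = A j i)
    (hent : ∀ i j : Fin n, A i j = 0 ∨ A i j = 1)
    (hdiag : ∀ i : Fin n, A i i = 0) :
    ((Nat.factorial n : ℂ))⁻¹ *
        (∑ g : Equiv.Perm (Fin n),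
          A (g ⟨n - 1, by omega⟩) (g ⟨n - 2, by omega⟩) *
            A (g ⟨n - 1, by omega⟩) (g ⟨n - 3, by omega⟩) *
            A (g ⟨n - 1, by omega⟩) (g ⟨n - 4, by omega⟩))
      = (∑ i : Fin n, (∑ j : Fin n, A i j) * ((∑ j : Fin n, A i j) - 1) *
            ((∑ j : Fin n, A i j) - 2)) /
          ((n * (n - 1) * (n - 2) * (n - 3) : ℕ) : ℂ)
    ∧ ((n * (n - 1) * (n - 2) * (n - 3) : ℕ) : ℂ) *
        (((Nat.factorial n : ℂ))⁻¹ *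
          (∑ g : Equiv.Perm (Fin n),
            A (g ⟨n - 1, by omega⟩) (g ⟨n - 2, by omega⟩) *
              A (g ⟨n - 1, by omega⟩) (g ⟨n - 3, by omega⟩) *
              A (g ⟨n - 1, by omega⟩) (g ⟨n - 4, by omega⟩)))
      = 6 * (Set.ncard {t : Finset (Finset (Fin n)) |
          t.card = 3 ∧
          (∀ e ∈ t, e.card = 2 ∧ ∀ i ∈ e, ∀ j ∈ e, i ≠ j → A i j = 1) ∧
          ∃ v : Fin n, ∀ e ∈ t, v ∈ e} : ℕ) := by
  simpa [Fin.prod_univ_three, prod_range_succ, Nat.descFactorial_eq_prod_range, Nat.factorial,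
      Fin.rev, -Nat.descFactorial_succ] using
    thirdCorrelation_star_general (k := 3) (by simp) ⟨hent, .ext fun i j ↦ hsymm j i, hdiag⟩
      ((Fin.castLEEmb hn).trans Fin.revPerm.toEmbedding)
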